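/- Let P(z) ∈ 𝔽_q[z] be irreducible of degree d > 0 and let Γ = {c₀ + c₁z + ⋯ + c_{d−1}z^{d−1} : c₀, …, c_{d−1} ∈ 𝔽_q} be the set of polynomials over 𝔽_q of degree less than d. Then Γ is a complete set of representatives modulo P(z), and for every element x of the P-adic completion of 𝔽_q(z), writing its unique expansion x = ∑_{n≥m} a_n P(z)ⁿ with digits a_n ∈ Γ, x is algebraic over 𝔽_q(z) if and only if the sequence {a_n}_{n≥m} is p-automatic. -/

import Mathlib

set_option synthInstance.maxHeartbeats 1000000
set_option maxHeartbeats 1000000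

/-!
Expansions in the `P`-adic completion of `𝔽_q(z)`: for an irreducible
`P ∈ 𝔽_q[z]` of degree `d > 0`, the `P`-adic completion of the rational function
field `𝔽_q(z) = RatFunc F` is modelled as the adic completion of `RatFunc F` at
the height-one prime `(P)` of `𝔽_q[z]`, which carries a canonical
`ℤₘ₀`-valuation (normalized so that `v(P) = ofAdd (-1)`, valuation ring
`A_v = {x | v x ≤ 1}`, and `P·A_v = {x | v x ≤ v P}`).
-/

open IsDedekindDomain

/-- A sequence `b : ℕ → α` is `k`-automatic if its `k`-kernel
`{ (b (n k^i + j))_n : i ≥ 0, 0 ≤ j < k^i }` is finite. -/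
def IsKAutomatic {α : Type*} (k : ℕ) (b : ℕ → α) : Prop :=
  {c : ℕ → α | ∃ i j : ℕ, j < k ^ i ∧ c = fun n => b (n * k ^ i + j)}.Finite

/-- The height-one prime `(P)` of `F[z]` attached to an irreducible polynomial `P`. -/
noncomputable def primeOfIrreducible {F : Type*} [Field F] (P : Polynomial F)
    (hP : Irreducible P) : HeightOneSpectrum (Polynomial F) :=
  ⟨Ideal.span {P}, (Ideal.span_singleton_prime hP.ne_zero).mpr hP.prime,
    by simp [Ideal.span_singleton_eq_bot, hP.ne_zero]⟩

/-- The canonical map `𝔽_q[z] → 𝔽_q(z) → K_v` into the `P`-adic completion. -/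
noncomputable def toAdicCompletion {F : Type*} [Field F] (P : Polynomial F)
    (hP : Irreducible P) (Q : Polynomial F) :
    (primeOfIrreducible P hP).adicCompletion (RatFunc F) :=
  algebraMap (RatFunc F) ((primeOfIrreducible P hP).adicCompletion (RatFunc F))
    (algebraMap (Polynomial F) (RatFunc F) Q)

/-!
Choosing the powers `1, z, …, z^{d-1}` as coordinates turns an expansion `∑ aₙ Pⁿ` into
`∑ uᵢ(P) zⁱ`, where the power series `uᵢ` collects the `i`-th coefficients of the digits; `aₙ` is
automatic iff every coefficient sequence is, that is, iff every `uᵢ` has a finite orbit under the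
Cartier operators `u ↦ (coefficients at np + j)^{1/p}`.

A series with finite orbit `S` satisfies `u = ∑ⱼ X^j (Λⱼ u)^p`, so all `u^{p^k}`, `k ≤ |S|`, lie
in the span of the `|S|` elements `v^{p^{|S|}}`, `v ∈ S`, and are linearly dependent: `u` is
algebraic.

Conversely, an algebraic `y = ∑ uᵢ(P) zⁱ` satisfies `∑ₖ cₖ y^{p^k} = 0` with `cₖ ∈ 𝔽_q[P]`. As
`1, P, …, P^{p-1}` are independent over the `p`-th powers (their valuations differ modulo `p`),
one can extract `p`-th roots of the relation until `c₀ ≠ 0`. Comparing coordinates expresses each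
`c₀ uᵢ` through the `uⱼ^{p^k}` with `k ≥ 1`, and the Cartier operators then preserve a finite set
of quotients by `c₀` of combinations of the `uⱼ^{p^k}` with coefficients of bounded degree.
-/

open scoped Polynomial PowerSeries

section Automatic

variable {α β : Type*} {k : ℕ}

theorem IsKAutomatic.map {b : ℕ → α} (hb : IsKAutomatic k b) (g : α → β) :
    IsKAutomatic k fun n => g (b n) := by
  refine (hb.image fun c n => g (c n)).subset ?_
  rintro _ ⟨i, j, hj, rfl⟩
  exact ⟨_, ⟨i, j, hj, rfl⟩, rfl⟩

theorem IsKAutomatic.pi {ι : Type*} [Finite ι] {b : ℕ → ι → α}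
    (hb : ∀ l, IsKAutomatic k fun n => b n l) : IsKAutomatic k b := by
  refine ((Set.Finite.pi' hb).image fun c n l => c l n).subset ?_
  rintro _ ⟨i, j, hj, rfl⟩
  exact ⟨fun l n => b (n * k ^ i + j) l, fun l => ⟨i, j, hj, rfl⟩, rfl⟩

theorem sum_C_coeff_mul_X_pow_of_degree_lt {R : Type*} [Semiring R] {d : ℕ} {Q : R[X]}
    (hQ : Q.degree < d) : ∑ i : Fin d, Polynomial.C (Q.coeff i) * Polynomial.X ^ (i : ℕ) = Q :=
  (Polynomial.sum_fin (fun i a => Polynomial.C a * Polynomial.X ^ i) (by simp) hQ).trans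
    Q.sum_C_mul_X_pow_eq

theorem isKAutomatic_iff_forall_coeff {R : Type*} [Semiring R] {d : ℕ} {b : ℕ → R[X]}
    (hb : ∀ n, (b n).degree < d) :
    IsKAutomatic k b ↔ ∀ i : Fin d, IsKAutomatic k fun n => (b n).coeff i := by
  refine ⟨fun h i => h.map fun Q => Q.coeff i, fun h => ?_⟩
  have hmap := (IsKAutomatic.pi h).map
    fun c => ∑ i : Fin d, Polynomial.C (c i) * Polynomial.X ^ (i : ℕ)
  simpa only [sum_C_coeff_mul_X_pow_of_degree_lt (hb _)] using hmap

end Automatic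

section Cartier

open PowerSeries

variable {R : Type*} [CommRing R] (p : ℕ) [ExpChar R p]

theorem coeff_pow_expChar (w : R⟦X⟧) (n : ℕ) :
    coeff n (w ^ p) = if p ∣ n then coeff (n / p) w ^ p else 0 := by
  have hp := expChar_ne_zero R p
  have frobenius_expand : PowerSeries.map (frobenius R p) (PowerSeries.expand p hp w) = w ^ p :=
    MvPowerSeries.map_frobenius_expand p hp
  rw [← frobenius_expand, coeff_map, PowerSeries.coeff_expand]
  split_ifs <;> simp [frobenius_def, hp]

theorem coeff_mul_add_X_pow_mul_pow {i j : ℕ} (hi : i < p) (hj : j < p) (w : R⟦X⟧) (n : ℕ) :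
    coeff (n * p + i) (X ^ j * w ^ p) = if i = j then coeff n w ^ p else 0 := by
  have hp := expChar_pos R p
  rw [coeff_X_pow_mul', coeff_pow_expChar]
  by_cases hij : i = j
  · subst hij
    simp [hp]
  · have not_dvd (hle : j ≤ n * p + i) : ¬ p ∣ n * p + i - j := fun hdvd => by
      have hmod := (Nat.modEq_iff_dvd' hle).2 hdvd
      rw [Nat.ModEq, Nat.mul_add_mod', Nat.mod_eq_of_lt hi, Nat.mod_eq_of_lt hj] at hmod
      exact hij hmod.symm
    split_ifs with hle hdvd
    · exact absurd hdvd (not_dvd hle)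
    · rfl
    · rfl

variable [PerfectRing R p]

/-- The `j`-th Cartier operator on power series over a perfect ring of characteristic `p`: it
keeps the coefficients of `u` at the indices `n * p + j` and takes their `p`-th roots, so that
`u = ∑ j < p, X ^ j * cartier p j u ^ p`. -/
noncomputable def cartier (j : ℕ) : R⟦X⟧ →+ R⟦X⟧ where
  toFun u := PowerSeries.mk fun n => (frobeniusEquiv R p).symm (coeff (n * p + j) u)
  map_zero' := by ext; simp
  map_add' u v := by ext; simp

theorem coeff_cartier (j : ℕ) (u : R⟦X⟧) (n : ℕ) :
    coeff n (cartier p j u) = (frobeniusEquiv R p).symm (coeff (n * p + j) u) := by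
  simp [cartier]

theorem coeff_cartier_pow (j : ℕ) (u : R⟦X⟧) (n : ℕ) :
    coeff n (cartier p j u) ^ p = coeff (n * p + j) u := by
  rw [coeff_cartier, frobeniusEquiv_symm_pow_p]

theorem cartier_sum_X_pow_mul_pow (w : ℕ → R⟦X⟧) {i : ℕ} (hi : i < p) :
    cartier p i (∑ j ∈ Finset.range p, X ^ j * w j ^ p) = w i := by
  ext n
  apply injective_frobenius R p
  have hsum : ∀ j ∈ Finset.range p, coeff (n * p + i) (X ^ j * w j ^ p) =
      if i = j then coeff n (w j) ^ p else 0 := fun j hj =>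
    coeff_mul_add_X_pow_mul_pow p hi (Finset.mem_range.1 hj) (w j) n
  rw [frobenius_def, frobenius_def, coeff_cartier_pow, map_sum, Finset.sum_congr rfl hsum,
    Finset.sum_ite_eq, if_pos (Finset.mem_range.2 hi)]

theorem sum_X_pow_mul_cartier_pow (u : R⟦X⟧) :
    ∑ j ∈ Finset.range p, X ^ j * cartier p j u ^ p = u := by
  ext m
  have hmod := Nat.mod_lt m (expChar_pos R p)
  rw [← Nat.div_add_mod' m p, ← coeff_cartier_pow p (m % p), ← coeff_cartier_pow p (m % p),
    cartier_sum_X_pow_mul_pow p _ hmod]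

theorem cartier_mul_pow {j : ℕ} (hj : j < p) (u w : R⟦X⟧) :
    cartier p j (u * w ^ p) = cartier p j u * w := by
  conv_lhs => rw [← sum_X_pow_mul_cartier_pow p u, Finset.sum_mul]
  simp only [mul_assoc, ← mul_pow]
  exact cartier_sum_X_pow_mul_pow p (fun i => cartier p i u * w) hj

/-- The Cartier operator `cartier p j` restricted to polynomials. Truncating past the degree of `Q`
loses nothing, see `coe_polyCartier`. -/
noncomputable def polyCartier (j : ℕ) (Q : R[X]) : R[X] :=
  trunc (Q.natDegree + 1) (cartier p j (Q : R⟦X⟧))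

theorem coeff_cartier_coe_eq_zero {Q : R[X]} {n : ℕ} (hn : Q.natDegree < n * p) (j : ℕ) :
    coeff n (cartier p j (Q : R⟦X⟧)) = 0 := by
  rw [coeff_cartier, Polynomial.coeff_coe,
    Polynomial.coeff_eq_zero_of_natDegree_lt (by omega), map_zero]

theorem coe_polyCartier (j : ℕ) (Q : R[X]) :
    (polyCartier p j Q : R⟦X⟧) = cartier p j (Q : R⟦X⟧) := by
  ext n
  rw [polyCartier, Polynomial.coeff_coe, coeff_trunc]
  split_ifs with hn
  · rfl
  · have hle : n ≤ n * p := Nat.le_mul_of_pos_right n (expChar_pos R p)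
    exact (coeff_cartier_coe_eq_zero p (by omega) j).symm

theorem natDegree_polyCartier_le {Q : R[X]} {N : ℕ} (hQ : Q.natDegree < (N + 1) * p) (j : ℕ) :
    (polyCartier p j Q).natDegree ≤ N := by
  refine Polynomial.natDegree_le_iff_coeff_eq_zero.2 fun n hn => ?_
  rw [← Polynomial.coeff_coe, coe_polyCartier]
  exact coeff_cartier_coe_eq_zero p (hQ.trans_le (Nat.mul_le_mul_right p hn)) j

theorem sum_X_pow_mul_polyCartier_pow (Q : R[X]) :
    ∑ j ∈ Finset.range p, Polynomial.X ^ j * polyCartier p j Q ^ p = Q := by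
  apply Polynomial.coe_injective R
  rw [← Polynomial.coeToPowerSeries.ringHom_apply, map_sum]
  simpa [coe_polyCartier] using sum_X_pow_mul_cartier_pow p (Q : R⟦X⟧)

theorem polynomial_smul_eq_coe_mul (Q : R[X]) (u : R⟦X⟧) : Q • u = (Q : R⟦X⟧) * u :=
  Algebra.smul_def Q u

theorem cartier_smul_pow {j : ℕ} (hj : j < p) (Q : R[X]) (w : R⟦X⟧) :
    cartier p j (Q • w ^ p) = polyCartier p j Q • w := by
  rw [polynomial_smul_eq_coe_mul, polynomial_smul_eq_coe_mul, cartier_mul_pow p hj,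
    coe_polyCartier]

theorem cartier_pow_smul {j : ℕ} (hj : j < p) (Q : R[X]) (u : R⟦X⟧) :
    cartier p j (Q ^ p • u) = Q • cartier p j u := by
  rw [polynomial_smul_eq_coe_mul, polynomial_smul_eq_coe_mul, Polynomial.coe_pow, mul_comm,
    cartier_mul_pow p hj, mul_comm]

end Cartier

section CartierFinite

variable {R : Type*} [CommRing R] (p : ℕ) [ExpChar R p] [PerfectRing R p]

/-- A power series is Cartier-finite if it lies in a finite set stable under all the Cartier
operators, i.e. if its orbit under them is finite. -/
def IsCartierFinite (u : R⟦X⟧) : Prop :=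
  ∃ S : Set R⟦X⟧, S.Finite ∧ u ∈ S ∧ ∀ v ∈ S, ∀ j < p, cartier p j v ∈ S

variable {p}

theorem IsCartierFinite.isKAutomatic [Finite R] {u : ℕ → R}
    (hu : IsCartierFinite p (PowerSeries.mk u)) : IsKAutomatic p u := by
  obtain ⟨S, hS, huS, hstable⟩ := hu
  -- the kernel elements are Cartier iterates of `u` up to a power of Frobenius on the values
  refine ((Set.finite_univ (α := R → R)).image2
    (fun g v n => g (PowerSeries.coeff n v)) hS).subset ?_
  rintro _ ⟨i, j, hj, rfl⟩
  induction i generalizing j with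
  | zero =>
    obtain rfl : j = 0 := by simpa using hj
    exact ⟨id, trivial, _, huS, by simp⟩
  | succ i ih =>
    have hpi : 0 < p ^ i := pow_pos (expChar_pos R p) i
    obtain ⟨g, -, v, hv, hgv⟩ := ih (j % p ^ i) (Nat.mod_lt _ hpi)
    have hquot : j / p ^ i < p := by
      rwa [Nat.div_lt_iff_lt_mul hpi, ← pow_succ']
    refine ⟨fun a => g (a ^ p), trivial, _, hstable v hv _ hquot, funext fun n => ?_⟩
    have index_eq : (n * p + j / p ^ i) * p ^ i + j % p ^ i = n * p ^ (i + 1) + j := by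
      rw [add_mul, add_assoc, Nat.div_add_mod', pow_succ', mul_assoc]
    simp only [coeff_cartier_pow, ← index_eq]
    exact congrFun hgv (n * p + j / p ^ i)

theorem IsKAutomatic.isCartierFinite [Finite R] {u : ℕ → R} (hu : IsKAutomatic p u) :
    IsCartierFinite p (PowerSeries.mk u) := by
  refine ⟨_, (Set.finite_univ (α := R → R)).image2 (fun g c => PowerSeries.mk fun n => g (c n)) hu,
    ⟨id, trivial, u, ⟨0, 0, by simp, by simp⟩, rfl⟩, ?_⟩
  rintro _ ⟨g, -, _, ⟨i, l, hl, rfl⟩, rfl⟩ j hj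
  refine ⟨fun a => (frobeniusEquiv R p).symm (g a), trivial, _,
    ⟨i + 1, j * p ^ i + l, ?_, rfl⟩, ?_⟩
  · calc j * p ^ i + l < (j + 1) * p ^ i := by rw [add_one_mul]; omega
      _ ≤ p ^ (i + 1) := by rw [pow_succ']; exact Nat.mul_le_mul_right _ hj
  · ext n
    simp only [coeff_cartier, PowerSeries.coeff_mk]
    congr 3
    ring

theorem isKAutomatic_iff_isCartierFinite [Finite R] {u : ℕ → R} :
    IsKAutomatic p u ↔ IsCartierFinite p (PowerSeries.mk u) :=
  ⟨IsKAutomatic.isCartierFinite, IsCartierFinite.isKAutomatic⟩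

end CartierFinite

section FinitenessCriterion

theorem finite_setOf_natDegree_le (R : Type*) [Semiring R] [Finite R] (N : ℕ) :
    {Q : R[X] | Q.natDegree ≤ N}.Finite := by
  refine (Set.finite_range fun c : Fin (N + 1) → R =>
    ∑ i, Polynomial.C (c i) * Polynomial.X ^ (i : ℕ)).subset fun Q hQ => ?_
  exact ⟨fun i => Q.coeff i, sum_C_coeff_mul_X_pow_of_degree_lt
    (Polynomial.degree_le_natDegree.trans_lt (by exact_mod_cast Nat.lt_succ_of_le hQ))⟩

theorem sq_smul_eq_sum_of_smul_eq_sum {A E ι : Type*} [CommRing A] [AddCommGroup E] [Module A E]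
    [Fintype ι] {c : A} {u : E} {w v : ι → E} {h : ι → A} {m : ι → ι → A}
    (hu : c • u = ∑ a, h a • w a) (hw : ∀ a, c • w a = ∑ b, m a b • v b) :
    c ^ 2 • u = ∑ b, (∑ a, h a * m a b) • v b := by
  calc c ^ 2 • u = ∑ a, h a • c • w a := by
        rw [sq, mul_smul, hu, Finset.smul_sum]
        exact Finset.sum_congr rfl fun a _ => smul_comm _ _ _
    _ = ∑ b, (∑ a, h a * m a b) • v b := by
        simp only [hw, Finset.smul_sum, Finset.sum_smul, mul_smul]
        exact Finset.sum_comm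

variable {R : Type*} [CommRing R] {ι : Type*} [Fintype ι] {w : ι → R⟦X⟧} {C : R[X]} {D : ℕ}

/-- The power series `u` with `C * u` a combination of the `w a` whose coefficients have degree at
most `D`: the finite set that contains the Cartier orbits when `C` clears the denominators in
expressing the `w a` through the `w b ^ p`. -/
def boundedCombinations (C : R[X]) (w : ι → R⟦X⟧) (D : ℕ) : Set R⟦X⟧ :=
  {u | ∃ H : ι → R[X], (∀ a, (H a).natDegree ≤ D) ∧ C • u = ∑ a, H a • w a}

theorem mem_boundedCombinations (hCD : C.natDegree ≤ D) (a : ι) :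
    w a ∈ boundedCombinations C w D := by
  classical
  refine ⟨Pi.single a C, fun b => ?_, by simp [Pi.single_apply]⟩
  rw [Pi.single_apply]
  split_ifs <;> simp [hCD]

theorem finite_boundedCombinations [IsDomain R] [Finite R] (hC : C ≠ 0) (w : ι → R⟦X⟧) (D : ℕ) :
    (boundedCombinations C w D).Finite := by
  have C_smul_injective : Function.Injective fun u : R⟦X⟧ => C • u := fun u v huv =>
    mul_left_cancel₀ (Polynomial.coe_eq_zero_iff.not.2 hC) <| by
      simpa only [polynomial_smul_eq_coe_mul] using huv
  refine Set.Finite.of_finite_image (f := fun u => C • u) ?_ C_smul_injective.injOn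
  refine ((Set.Finite.pi' fun _ : ι => finite_setOf_natDegree_le R D).image
    fun H => ∑ a, H a • w a).subset ?_
  rintro _ ⟨u, ⟨H, hH, hu⟩, rfl⟩
  exact ⟨H, hH, hu.symm⟩

variable {p : ℕ} [Fact p.Prime] [CharP R p]

theorem cartier_mem_boundedCombinations [PerfectRing R p] (hCD : C.natDegree ≤ D) {M : ι → ι → R[X]}
    (hMD : ∀ a b, (M a b).natDegree ≤ D) (hM : ∀ a, C • w a = ∑ b, M a b • w b ^ p)
    {u : R⟦X⟧} (hu : u ∈ boundedCombinations C w D) {j : ℕ} (hj : j < p) :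
    cartier p j u ∈ boundedCombinations C w D := by
  obtain ⟨H, hH, hu⟩ := hu
  have hp : p - 2 + 2 = p := Nat.sub_add_cancel (Fact.out : p.Prime).two_le
  have pow_smul_u : C ^ p • u = ∑ b, (C ^ (p - 2) * ∑ a, H a * M a b) • w b ^ p := by
    conv_lhs => rw [← hp]
    rw [pow_add, mul_smul, sq_smul_eq_sum_of_smul_eq_sum hu hM, Finset.smul_sum]
    simp only [mul_smul]
  refine ⟨fun b => polyCartier p j (C ^ (p - 2) * ∑ a, H a * M a b), fun b => ?_, ?_⟩
  · refine natDegree_polyCartier_le p ?_ j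
    calc (C ^ (p - 2) * ∑ a, H a * M a b).natDegree ≤ (p - 2) * D + (D + D) :=
          Polynomial.natDegree_mul_le_of_le (Polynomial.natDegree_pow_le_of_le _ hCD)
            (Polynomial.natDegree_sum_le_of_forall_le _ _ fun a _ =>
              Polynomial.natDegree_mul_le_of_le (hH a) (hMD a b))
      _ = D * p := by conv_rhs => rw [← hp, mul_add, mul_two, mul_comm]
      _ < (D + 1) * p := by rw [add_one_mul]; exact Nat.lt_add_of_pos_right (by omega)
  · rw [← cartier_pow_smul p hj, pow_smul_u, map_sum]
    exact Finset.sum_congr rfl fun b _ => cartier_smul_pow p hj _ _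

theorem isCartierFinite_of_smul_mem_span_pow [IsDomain R] [Finite R] {ι : Type*} [Finite ι]
    {w : ι → R⟦X⟧} (hC : C ≠ 0)
    (hw : ∀ a, C • w a ∈ Submodule.span R[X] (Set.range fun b => w b ^ p)) (a : ι) :
    IsCartierFinite p (w a) := by
  cases nonempty_fintype ι
  simp only [Submodule.mem_span_range_iff_exists_fun] at hw
  choose M hM using hw
  let D := C.natDegree ⊔ Finset.univ.sup fun ab : ι × ι => (M ab.1 ab.2).natDegree
  have hCD : C.natDegree ≤ D := le_sup_left
  have hMD (a b : ι) : (M a b).natDegree ≤ D := le_sup_of_le_right <|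
    Finset.le_sup (f := fun ab : ι × ι => (M ab.1 ab.2).natDegree) (Finset.mem_univ (a, b))
  exact ⟨boundedCombinations C w D, finite_boundedCombinations hC w D,
    mem_boundedCombinations hCD a, fun _ hu _ hj =>
      cartier_mem_boundedCombinations hCD hMD (fun a => (hM a).symm) hu hj⟩

end FinitenessCriterion

section AlgebraicPowers

variable {R A : Type*} [CommRing R]

theorem isAlgebraic_of_not_linearIndependent_pow [CommRing A] [Algebra R A] {x : A} {e : ℕ → ℕ}
    (he : e.Injective) (hx : ¬ LinearIndependent R fun k => x ^ e k) : IsAlgebraic R x := by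
  by_contra hx'
  have aeval_ker : LinearMap.ker (Polynomial.aeval (R := R) x).toLinearMap = ⊥ :=
    LinearMap.ker_eq_bot.2 (transcendental_iff_injective.1 hx')
  have powers_independent :=
    (Polynomial.basisMonomials R).linearIndependent.map' _ aeval_ker
  refine hx ?_
  simpa [Function.comp_def] using powers_independent.comp e he

theorem not_linearIndependent_pow_of_isAlgebraic [IsDomain R] [Field A] [Algebra R A]
    [FaithfulSMul R A] {x : A} (hx : IsAlgebraic R x) (e : ℕ → ℕ) :
    ¬ LinearIndependent R fun k => x ^ e k := by
  let := FractionRing.liftAlgebra R A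
  rw [LinearIndependent.iff_fractionRing R (FractionRing R)]
  have hx' : IsAlgebraic (FractionRing R) x :=
    (IsFractionRing.isAlgebraic_iff R (FractionRing R) A).1 hx
  obtain ⟨w, hw⟩ := hx'.isIntegral.fg_adjoin_singleton
  intro hli
  refine not_finite_iff_infinite.2 inferInstance (hli.finite_of_le_span_finite _ (w : Set A) ?_)
  rintro _ ⟨k, rfl⟩
  rw [hw]
  exact pow_mem (Algebra.self_mem_adjoin_singleton _ x) _

end AlgebraicPowers

section CartierFiniteAlgebraic

variable {R : Type*} [CommRing R] {p : ℕ} [Fact p.Prime] [CharP R p]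
  [PerfectRing R p]

theorem span_pow_le_span_pow_succ {S : Set R⟦X⟧} (hS : ∀ v ∈ S, ∀ j < p, cartier p j v ∈ S)
    (k : ℕ) : Submodule.span R[X] ((fun v => v ^ p ^ k) '' S) ≤
      Submodule.span R[X] ((fun v => v ^ p ^ (k + 1)) '' S) := by
  have : ExpChar R⟦X⟧ p :=
    expChar_of_injective_ringHom (f := PowerSeries.C (R := R)) PowerSeries.C_injective p
  rw [Submodule.span_le]
  rintro _ ⟨v, hv, rfl⟩
  simp only [SetLike.mem_coe]
  rw [← sum_X_pow_mul_cartier_pow p v, sum_pow_char_pow]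
  refine Submodule.sum_mem _ fun j hj => ?_
  have term_eq : (PowerSeries.X ^ j * cartier p j v ^ p) ^ p ^ k =
      ((Polynomial.X ^ j) ^ p ^ k : R[X]) • cartier p j v ^ p ^ (k + 1) := by
    rw [polynomial_smul_eq_coe_mul, mul_pow, ← pow_mul (cartier p j v), ← pow_succ']
    simp
  rw [term_eq]
  exact Submodule.smul_mem _ _ (Submodule.subset_span ⟨_, hS v hv j (Finset.mem_range.1 hj), rfl⟩)

theorem IsCartierFinite.isAlgebraic {u : R⟦X⟧} (hu : IsCartierFinite p u) :
    IsAlgebraic R[X] u := by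
  obtain ⟨S, hS, huS, hstable⟩ := hu
  refine isAlgebraic_of_not_linearIndependent_pow
    (Nat.pow_right_injective (Fact.out : p.Prime).two_le) fun hli => ?_
  have : Nontrivial R := CharP.nontrivial_of_char_ne_one (Fact.out : p.Prime).ne_one
  let n := S.ncard
  let T : Set R⟦X⟧ := (fun v => v ^ p ^ n) '' S
  have : Fintype T := (hS.image _).fintype
  have card_T : Fintype.card T ≤ n := by
    rw [← Nat.card_eq_fintype_card]
    exact Set.ncard_image_le hS
  have mem_span_T (k : Fin (n + 1)) : u ^ p ^ (k : ℕ) ∈ Submodule.span R[X] T :=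
    monotone_nat_of_le_succ (span_pow_le_span_pow_succ hstable) (Nat.lt_succ_iff.1 k.2)
      (Submodule.subset_span ⟨u, huS, rfl⟩)
  have card_le := linearIndependent_le_span_aux' _ (hli.comp _ Fin.val_injective) T
    (Set.range_subset_iff.2 mem_span_T)
  rw [Fintype.card_fin] at card_le
  omega

end CartierFiniteAlgebraic

section SubstitutionAlgebra

variable {F L : Type*} [Field F] [Field L] [Algebra (RatFunc F) L] [Algebra F[X] L]
  {α : RatFunc F}

open scoped IntermediateField.algebraAdjoinAdjoin in
theorem isAlgebraic_ratFunc_iff_of_algebraMap_eq_aeval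
    (hα : ¬ ∃ c, α = RatFunc.C c) (hmap : ∀ Q : F[X], algebraMap F[X] L Q =
      algebraMap (RatFunc F) L (Polynomial.aeval α Q)) {x : L} :
    IsAlgebraic (RatFunc F) x ↔ IsAlgebraic F[X] x := by
  have : Algebra.IsAlgebraic (IntermediateField.adjoin F {α}) (RatFunc F) :=
    RatFunc.isAlgebraic_adjoin_simple_X' α hα
  rw [← Algebra.IsAlgebraic.isAlgebraic_iff (IntermediateField.adjoin F {α}) (RatFunc F),
    ← IsFractionRing.isAlgebraic_iff (Algebra.adjoin F {α}) (IntermediateField.adjoin F {α}) L]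
  let e := Polynomial.algEquivOfTranscendental F α (α.transcendental_of_ne_C hα)
  refine isAlgebraic_ringHom_iff_of_comp_eq e (RingHom.id L) Function.injective_id ?_
  refine RingHom.ext fun Q => ?_
  rw [RingHom.comp_apply, IsScalarTower.algebraMap_apply _ (RatFunc F) L]
  have coe_e : algebraMap (Algebra.adjoin F {α}) (RatFunc F) (e Q) = Polynomial.aeval α Q :=
    (Polynomial.aeval_algebraMap_apply (RatFunc F) _ Q).symm
  exact (congrArg _ coe_e).trans (hmap Q).symm

theorem faithfulSMul_of_algebraMap_eq_aeval
    (hα : ¬ ∃ c, α = RatFunc.C c) (hmap : ∀ Q : F[X], algebraMap F[X] L Q =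
      algebraMap (RatFunc F) L (Polynomial.aeval α Q)) : FaithfulSMul F[X] L := by
  rw [faithfulSMul_iff_algebraMap_injective, funext hmap]
  exact (algebraMap (RatFunc F) L).injective.comp
    (transcendental_iff_injective.1 (α.transcendental_of_ne_C hα))

theorem not_exists_algebraMap_eq_ratFunc_C {P : F[X]} (hP : 0 < P.natDegree) :
    ¬ ∃ c, algebraMap F[X] (RatFunc F) P = RatFunc.C c := by
  rintro ⟨c, hc⟩
  rw [← RatFunc.algebraMap_C] at hc
  simp [RatFunc.algebraMap_injective F hc] at hP

end SubstitutionAlgebra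

/-- `p`-independence of an element `t` of a ring of characteristic `p`: the powers `t ^ j`, `j < p`,
are linearly independent over the subring of `p`-th powers. -/
def IsPIndependent {L : Type*} [CommSemiring L] (p : ℕ) (t : L) : Prop :=
  ∀ y : ℕ → L, ∑ j ∈ Finset.range p, t ^ j * y j ^ p = 0 → ∀ j < p, y j = 0

section Descent

variable {R L : Type*} [CommRing R] [CommRing L] [Algebra R[X] L] {p : ℕ}
  [ExpChar R p] [PerfectRing R p] [ExpChar L p]

theorem IsPIndependent.sum_polyCartier_smul_eq_zero
    (ht : IsPIndependent p (algebraMap R[X] L Polynomial.X)) {f : L} {s : ℕ} {c : ℕ → R[X]}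
    (h : ∑ k ∈ Finset.range s, c k • f ^ p ^ (k + 1) = 0) {j : ℕ} (hj : j < p) :
    ∑ k ∈ Finset.range s, polyCartier p j (c k) • f ^ p ^ k = 0 := by
  refine ht (fun j => ∑ k ∈ Finset.range s, polyCartier p j (c k) • f ^ p ^ k) ?_ j hj
  have split_coeff (k : ℕ) : c k • f ^ p ^ (k + 1) = ∑ j ∈ Finset.range p,
      algebraMap R[X] L Polynomial.X ^ j * (polyCartier p j (c k) • f ^ p ^ k) ^ p := by
    conv_lhs => rw [← sum_X_pow_mul_polyCartier_pow p (c k), Finset.sum_smul]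
    refine Finset.sum_congr rfl fun j _ => ?_
    rw [smul_pow, ← pow_mul, ← pow_succ, ← map_pow, ← Algebra.smul_def, smul_smul]
  simp_rw [← h, split_coeff, sum_pow_char, Finset.mul_sum]
  exact Finset.sum_comm

theorem IsPIndependent.linearIndependent_pow
    (ht : IsPIndependent p (algebraMap R[X] L Polynomial.X)) {f : L}
    (hf : ∀ c : R[X], c ≠ 0 → ∀ (s : ℕ) (a : ℕ → R[X]),
      c • f ≠ ∑ k ∈ Finset.range s, a k • f ^ p ^ (k + 1)) :
    LinearIndependent R[X] fun k => f ^ p ^ k := by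
  have coeff_eq_zero (s : ℕ) : ∀ c : ℕ → R[X], ∑ k ∈ Finset.range s, c k • f ^ p ^ k = 0 →
      ∀ k < s, c k = 0 := by
    induction s with
    | zero => simp
    | succ s ih =>
      intro c hc
      rw [Finset.sum_range_succ', pow_zero, pow_one] at hc
      have c_zero : c 0 = 0 := by
        by_contra hc0
        refine hf (c 0) hc0 s (fun k => -c (k + 1)) ?_
        rw [eq_neg_of_add_eq_zero_right hc]
        simp only [neg_smul, Finset.sum_neg_distrib]
      rw [c_zero, zero_smul, add_zero] at hc
      rintro (_ | k) hk
      · exact c_zero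
      · rw [← sum_X_pow_mul_polyCartier_pow p (c (k + 1))]
        refine Finset.sum_eq_zero fun j hj => ?_
        rw [ih _ (ht.sum_polyCartier_smul_eq_zero hc (Finset.mem_range.1 hj)) k (by omega),
          zero_pow (expChar_ne_zero R p), mul_zero]
  refine linearIndependent_iff''.2 fun S c hcS hc k => ?_
  obtain ⟨n, hn⟩ := S.exists_nat_subset_range
  by_cases hk : k ∈ S
  · refine coeff_eq_zero n c ?_ k (Finset.mem_range.1 (hn hk))
    rw [← hc]
    exact (Finset.sum_subset hn fun i _ hi => by rw [hcS i hi, zero_smul]).symm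
  · exact hcS k hk

end Descent

theorem IsPIndependent.exists_smul_eq_sum_pow {R L : Type*} [CommRing R] [IsDomain R] [Field L]
    [Algebra R[X] L] [FaithfulSMul R[X] L] {p : ℕ} [ExpChar R p] [PerfectRing R p] [ExpChar L p]
    (ht : IsPIndependent p (algebraMap R[X] L Polynomial.X)) {f : L} (hf : IsAlgebraic R[X] f) :
    ∃ c : R[X], c ≠ 0 ∧ ∃ (s : ℕ) (a : ℕ → R[X]),
      c • f = ∑ k ∈ Finset.range s, a k • f ^ p ^ (k + 1) := by
  by_contra! h
  exact not_linearIndependent_pow_of_isAlgebraic hf _ (ht.linearIndependent_pow h)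

section Coordinates

variable {A B L ι : Type*} [CommRing A] [CommRing B] [CommRing L] [Algebra A B] [Algebra A L]
  [Algebra B L] [IsScalarTower A B L] [Fintype ι] {ω : ι → L}

/-- The elements of `L` that have coordinates in `N` with respect to the family `ω`. As an
`A`-submodule it allows an `A`-linear relation in `L` to be read off coordinatewise. -/
def coordinatesIn (ω : ι → L) (N : Submodule A B) : Submodule A L :=
  (Submodule.pi Set.univ fun _ => N).map ((Fintype.linearCombination B ω).restrictScalars A)

theorem sum_smul_mem_coordinatesIn_iff (hω : LinearIndependent B ω) {N : Submodule A B}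
    {u : ι → B} : ∑ i, u i • ω i ∈ coordinatesIn ω N ↔ ∀ i, u i ∈ N := by
  have injective := linearIndependent_iff_injective_fintypeLinearCombination.1 hω
  exact injective.mem_set_image.trans (by simp)

theorem smul_mem_coordinatesIn {N : Submodule A B} {v : B} (hv : v ∈ N) {z : L}
    (hz : z ∈ Submodule.span A (Set.range ω)) : v • z ∈ coordinatesIn ω N := by
  obtain ⟨a, rfl⟩ := (Submodule.mem_span_range_iff_exists_fun A).1 hz
  refine ⟨fun i => a i • v, fun i _ => N.smul_mem _ hv, ?_⟩
  simp only [LinearMap.coe_restrictScalars, Fintype.linearCombination_apply, smul_assoc,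
    Finset.smul_sum, smul_comm v]

theorem smul_mem_span_pow_of_sum_smul_eq {p : ℕ} [ExpChar L p] (hω : LinearIndependent B ω)
    (hpow : ∀ i n, ω i ^ n ∈ Submodule.span A (Set.range ω)) {u : ι → B} {f : L}
    (hf : f = ∑ i, u i • ω i) {c : A} {s : ℕ} {a : ℕ → A}
    (hrel : c • f = ∑ k ∈ Finset.range s, a k • f ^ p ^ (k + 1)) (i : ι) :
    c • u i ∈ Submodule.span A (Set.range fun l : ι × Fin s => u l.1 ^ p ^ ((l.2 : ℕ) + 1)) := by
  set N := Submodule.span A (Set.range fun l : ι × Fin s => u l.1 ^ p ^ ((l.2 : ℕ) + 1))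
  suffices h : ∑ i, (c • u i) • ω i ∈ coordinatesIn ω N from
    (sum_smul_mem_coordinatesIn_iff hω).1 h i
  have smul_f : ∑ i, (c • u i) • ω i = c • f := by
    simp only [hf, Finset.smul_sum, smul_assoc]
  rw [smul_f, hrel]
  refine Submodule.sum_mem _ fun k hk => Submodule.smul_mem _ _ ?_
  simp only [hf, sum_pow_char_pow, smul_pow]
  refine Submodule.sum_mem _ fun j _ => smul_mem_coordinatesIn ?_ (hpow j _)
  exact Submodule.subset_span ⟨(j, ⟨k, Finset.mem_range.1 hk⟩), rfl⟩

end Coordinates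

theorem isCartierFinite_of_smul_mem_span_pow_pow {R ι : Type*} [CommRing R] [IsDomain R]
    [Finite R] {p : ℕ} [Fact p.Prime] [CharP R p] [Finite ι] {u : ι → R⟦X⟧} {c : R[X]}
    (hc : c ≠ 0) {s : ℕ} (hu : ∀ i, c • u i ∈
      Submodule.span R[X] (Set.range fun l : ι × Fin s => u l.1 ^ p ^ ((l.2 : ℕ) + 1)))
    (i : ι) : IsCartierFinite p (u i) := by
  let w : ι × Fin (s + 1) → R⟦X⟧ := fun l => u l.1 ^ p ^ (l.2 : ℕ)
  have pow_w (j : ι) (k : Fin s) : w (j, k.castSucc) ^ p = u j ^ p ^ ((k : ℕ) + 1) := by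
    rw [← pow_mul, ← pow_succ, Fin.val_castSucc]
  have hw (l) : c • w l ∈ Submodule.span R[X] (Set.range fun b => w b ^ p) := by
    obtain ⟨j, k⟩ := l
    cases k using Fin.cases with
    | zero =>
      refine Submodule.span_mono ?_ (by simpa [w] using hu j)
      rintro _ ⟨⟨j, k⟩, rfl⟩
      exact ⟨(j, k.castSucc), pow_w j k⟩
    | succ k =>
      exact Submodule.smul_mem _ _ (Submodule.subset_span ⟨(j, k.castSucc), pow_w j k⟩)
  simpa [w] using isCartierFinite_of_smul_mem_span_pow hc hw (i, 0)

theorem isCartierFinite_of_isAlgebraic_sum_smul {R L ι : Type*} [CommRing R] [IsDomain R]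
    [Finite R] {p : ℕ} [Fact p.Prime] [CharP R p] [Field L] [Algebra R[X] L] [Algebra R⟦X⟧ L]
    [IsScalarTower R[X] R⟦X⟧ L] [FaithfulSMul R[X] L] [Fintype ι] {ω : ι → L}
    (ht : IsPIndependent p (algebraMap R[X] L Polynomial.X)) (hω : LinearIndependent R⟦X⟧ ω)
    (hpow : ∀ i n, ω i ^ n ∈ Submodule.span R[X] (Set.range ω)) {u : ι → R⟦X⟧}
    (h : IsAlgebraic R[X] (∑ i, u i • ω i)) (i : ι) : IsCartierFinite p (u i) := by
  have : CharP L p := charP_of_injective_algebraMap (FaithfulSMul.algebraMap_injective R[X] L) p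
  have : ExpChar L p := ExpChar.prime Fact.out
  obtain ⟨c, hc, s, a, hrel⟩ := ht.exists_smul_eq_sum_pow h
  exact isCartierFinite_of_smul_mem_span_pow_pow hc
    (smul_mem_span_pow_of_sum_smul_eq hω hpow rfl hrel) i

section PowerSeriesEvaluation

variable {L Γ₀ : Type*} [Field L] [LinearOrderedCommGroupWithZero Γ₀] [hL : Valued L Γ₀]

theorem isLinearTopology_valued_integer : IsLinearTopology hL.v.integer hL.v.integer := by
  have basis := (Valued.hasBasis_nhds_zero L Γ₀).comap ((↑) : hL.v.integer → L)
  rw [← ZeroMemClass.coe_zero hL.v.integer, ← nhds_subtype] at basis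
  let ball (γ : (MonoidWithZeroHom.ValueGroup₀ (.ofClass hL.v))ˣ) : Ideal hL.v.integer :=
    hL.v.ltIdeal (Units.map ↑(MonoidWithZeroHom.ValueGroup₀.embedding (f := .ofClass hL.v)) γ)
  refine IsLinearTopology.mk_of_hasBasis (s := ball) _ (basis.congr (fun _ => Iff.rfl) ?_)
  intro γ _
  ext x
  exact Valuation.restrict_lt_iff_lt_embedding _

theorem exists_powerSeries_ringHom_hasSum {R : Type*} [CommRing R] [MulArchimedean Γ₀]
    [CompleteSpace L] {κ : R →+* L} (hκ : ∀ c, hL.v (κ c) ≤ 1) {t : L} (ht : hL.v t < 1) :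
    ∃ φ : R⟦X⟧ →+* L, (∀ u, hL.v (φ u) ≤ 1) ∧ (∀ Q : R[X], φ Q = Q.eval₂ κ t) ∧
      ∀ u, HasSum (fun n => κ (PowerSeries.coeff n u) * t ^ n) (φ u) := by
  let : UniformSpace R := ⊥
  have : DiscreteTopology R := ⟨rfl⟩
  have : IsUniformAddGroup hL.v.integer := hL.v.integer.toAddSubgroup.isUniformAddGroup
  have : IsLinearTopology hL.v.integer hL.v.integer := isLinearTopology_valued_integer
  have : CompleteSpace hL.v.integer := (Valued.isClosed_integer L).completeSpace_coe
  let κ' : R →+* hL.v.integer := κ.codRestrict _ hκ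
  let t' : hL.v.integer := ⟨t, ht.le⟩
  have ht' : PowerSeries.HasEval t' := by
    refine tendsto_subtype_rng.2 ?_
    exact Valued.tendsto_zero_pow_of_v_lt_one ht
  have hκ' : Continuous κ' := continuous_of_discreteTopology
  refine ⟨hL.v.integer.subtype.comp (PowerSeries.eval₂Hom hκ' ht'),
    fun u => (PowerSeries.eval₂Hom hκ' ht' u).prop,
    fun Q => ?_, fun u => ?_⟩
  · rw [RingHom.comp_apply, PowerSeries.coe_eval₂Hom, PowerSeries.eval₂_coe, Polynomial.hom_eval₂]
    rfl
  · rw [RingHom.comp_apply, PowerSeries.coe_eval₂Hom]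
    exact (PowerSeries.hasSum_eval₂ hκ' ht' u).map hL.v.integer.subtype continuous_subtype_val

end PowerSeriesEvaluation

section Valuation

theorem sum_ne_zero_of_injOn_valuation {R Γ₀ ι : Type*} [Ring R]
    [LinearOrderedCommGroupWithZero Γ₀] (v : Valuation R Γ₀) {s : Finset ι} (hs : s.Nonempty)
    {f : ι → R} (hf : ∀ i ∈ s, v (f i) ≠ 0) (hinj : Set.InjOn (fun i => v (f i)) s) :
    ∑ i ∈ s, f i ≠ 0 := by
  classical
  obtain ⟨k, hk, hmax⟩ := s.exists_max_image (fun i => v (f i)) hs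
  have hlt (i) (hi : i ∈ s \ {k}) : v (f i) < v (f k) := by
    rw [Finset.mem_sdiff, Finset.mem_singleton] at hi
    exact (hmax i hi.1).lt_of_ne fun h => hi.2 (hinj hi.1 hk h)
  intro hsum
  exact hf k hk (by rw [← v.map_sum_eq_of_lt hk hlt, hsum, map_zero])

theorem le_exp_neg_one_iff_lt_one {x : WithZero (Multiplicative ℤ)} :
    x ≤ WithZero.exp (-1) ↔ x < 1 := by
  rcases eq_or_ne x 0 with rfl | hx
  · simp
  · rw [← WithZero.exp_log hx, ← WithZero.exp_zero, WithZero.exp_le_exp, WithZero.exp_lt_exp]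
    omega

variable {L : Type*} [Field L] {v : Valuation L (WithZero (Multiplicative ℤ))} {t : L}

theorem log_valuation_pow_mul_pow (ht : v t = WithZero.exp (-1)) {y : L} (hy : y ≠ 0) (j p : ℕ) :
    WithZero.log (v (t ^ j * y ^ p)) = p * WithZero.log (v y) - j := by
  have hv : v y ≠ 0 := v.ne_zero_iff.2 hy
  have : v t ≠ 0 := ht ▸ WithZero.exp_ne_zero
  rw [map_mul, map_pow, map_pow, WithZero.log_mul (pow_ne_zero _ this) (pow_ne_zero _ hv),
    WithZero.log_pow, WithZero.log_pow, ht, WithZero.log_exp]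
  simp only [nsmul_eq_mul]
  ring

/- The values of the nonzero terms `t ^ j * y j ^ p` are distinct, being `-j` modulo `p`. -/
theorem isPIndependent_of_valuation_eq_exp_neg_one (ht : v t = WithZero.exp (-1)) (p : ℕ) :
    IsPIndependent p t := by
  classical
  intro y hsum
  by_contra! ⟨j₀, hj₀, hy₀⟩
  set S := (Finset.range p).filter fun j => y j ≠ 0 with hS
  have mem_S {j} : j ∈ S ↔ j < p ∧ y j ≠ 0 := by simp [hS]
  have ht₀ : t ≠ 0 := v.ne_zero_iff.1 (ht ▸ WithZero.exp_ne_zero)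
  refine sum_ne_zero_of_injOn_valuation v ⟨j₀, mem_S.2 ⟨hj₀, hy₀⟩⟩
    (f := fun j => t ^ j * y j ^ p) ?_ ?_ ?_
  · intro j hj
    simp [ht₀, (mem_S.1 hj).2]
  · intro j hj k hk hjk
    obtain ⟨hjp, hj⟩ := mem_S.1 hj
    obtain ⟨hkp, hk⟩ := mem_S.1 hk
    have hlog := congrArg WithZero.log hjk
    simp only [log_valuation_pow_mul_pow ht hj, log_valuation_pow_mul_pow ht hk] at hlog
    have dvd : (p : ℤ) ∣ j - k :=
      ⟨WithZero.log (v (y j)) - WithZero.log (v (y k)), by linear_combination -hlog⟩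
    have := Int.eq_zero_of_abs_lt_dvd dvd (by rw [abs_lt]; omega)
    omega
  · rw [← hsum, hS]
    refine Finset.sum_filter_of_ne fun j hj hne hy => hne ?_
    rw [hy, zero_pow (by have := Finset.mem_range.1 hj; omega), mul_zero]

end Valuation

section PowersOfGenerator

theorem pow_mem_span_range_pow {A L : Type*} [CommRing A] [CommRing L] [Algebra A L] {f : A[X]}
    (hf : f.Monic) {θ : L} (hθ : Polynomial.aeval θ f = 0) (n : ℕ) :
    θ ^ n ∈ Submodule.span A (Set.range fun i : Fin f.natDegree => θ ^ (i : ℕ)) := by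
  classical
  have mem_adjoin : θ ^ n ∈ Subalgebra.toSubmodule (Algebra.adjoin A {θ}) :=
    pow_mem (Algebra.self_mem_adjoin_singleton A θ) n
  rw [← Submodule.span_range_natDegree_eq_adjoin hf hθ] at mem_adjoin
  refine Submodule.span_mono ?_ mem_adjoin
  intro x hx
  obtain ⟨i, hi, rfl⟩ := Finset.mem_image.1 hx
  exact ⟨⟨i, Finset.mem_range.1 hi⟩, rfl⟩

theorem pow_mem_span_range_pow_of_aeval_eq_algebraMap {F A L : Type*} [Field F] [CommRing A]
    [Nontrivial A] [CommRing L] [Algebra F A] [Algebra A L] [Algebra F L] [IsScalarTower F A L]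
    {P : F[X]} (hP : 0 < P.natDegree) {θ : L} {a : A}
    (hθ : Polynomial.aeval θ P = algebraMap A L a) (n : ℕ) :
    θ ^ n ∈ Submodule.span A (Set.range fun i : Fin P.natDegree => θ ^ (i : ℕ)) := by
  have hP₀ : P ≠ 0 := by rintro rfl; simp at hP
  let c := algebraMap F A P.leadingCoeff⁻¹
  let g := (P * Polynomial.C P.leadingCoeff⁻¹).map (algebraMap F A)
  have hg : g.Monic := (Polynomial.monic_mul_leadingCoeff_inv hP₀).map _
  have natDegree_g : g.natDegree = P.natDegree := by
    rw [Polynomial.natDegree_map, Polynomial.natDegree_mul_leadingCoeff_inv P hP₀]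
  let f := g - Polynomial.C (a * c)
  have hf : f.Monic := by
    refine hg.sub_of_left (Polynomial.degree_C_le.trans_lt ?_)
    rwa [← Polynomial.natDegree_pos_iff_degree_pos, natDegree_g]
  have aeval_f : Polynomial.aeval θ f = 0 := by
    simp only [f, g, c, map_sub, Polynomial.aeval_map_algebraMap, map_mul, Polynomial.aeval_C, hθ,
      ← IsScalarTower.algebraMap_apply, sub_self]
  have natDegree_f : f.natDegree = P.natDegree := by
    rw [Polynomial.natDegree_sub_C, natDegree_g]
  exact natDegree_f ▸ pow_mem_span_range_pow hf aeval_f n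

theorem linearIndependent_of_constantCoeff_eq_zero {R M ι : Type*} [CommRing R] [AddCommGroup M]
    [Module R⟦X⟧ M] [Fintype ι] {ω : ι → M}
    (hX : ∀ m : M, (PowerSeries.X : R⟦X⟧) • m = 0 → m = 0)
    (hω : ∀ u : ι → R⟦X⟧, ∑ i, u i • ω i = 0 → ∀ i, PowerSeries.constantCoeff (u i) = 0) :
    LinearIndependent R⟦X⟧ ω := by
  have coeff_eq_zero (n : ℕ) : ∀ u : ι → R⟦X⟧, ∑ i, u i • ω i = 0 →
      ∀ i, PowerSeries.coeff n (u i) = 0 := by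
    induction n with
    | zero => simpa using hω
    | succ n ih =>
      intro u hu i
      have X_dvd (i) : PowerSeries.X ∣ u i := PowerSeries.X_dvd_iff.2 (hω u hu i)
      choose w hw using X_dvd
      simp only [hw, mul_smul, ← Finset.smul_sum] at hu
      rw [hw i, PowerSeries.coeff_succ_X_mul]
      exact ih w (hX _ hu) i
  refine Fintype.linearIndependent_iff.2 fun u hu i => PowerSeries.ext fun n => ?_
  rw [coeff_eq_zero n u hu i, map_zero]

theorem exists_degree_lt_coeff_eq {R : Type*} [Semiring R] {d : ℕ} (c : Fin d → R) :
    ∃ Q : R[X], Q.degree < d ∧ ∀ i : Fin d, Q.coeff i = c i :=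
  let Q := (Polynomial.degreeLTEquiv R d).symm c
  ⟨Q, Polynomial.mem_degreeLT.1 Q.2,
    congrFun ((Polynomial.degreeLTEquiv R d).apply_symm_apply c)⟩

theorem linearIndependent_pow_of_valuation_aeval {F L Γ₀ : Type*} [Field F] [Field L]
    [Algebra F⟦X⟧ L] [Algebra F L] [IsScalarTower F F⟦X⟧ L] [LinearOrderedCommGroupWithZero Γ₀]
    {v : Valuation L Γ₀} (hv : ∀ u : F⟦X⟧, v (algebraMap F⟦X⟧ L u) ≤ 1)
    (hX : v (algebraMap F⟦X⟧ L PowerSeries.X) < 1) (hX₀ : algebraMap F⟦X⟧ L PowerSeries.X ≠ 0)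
    {θ : L} (hθ : v θ ≤ 1) {P : F[X]}
    (hP : ∀ Q : F[X], v (Polynomial.aeval θ Q) < 1 → P ∣ Q) :
    LinearIndependent F⟦X⟧ fun i : Fin P.natDegree => θ ^ (i : ℕ) := by
  refine linearIndependent_of_constantCoeff_eq_zero (fun m hm => ?_) fun u hu => ?_
  · rw [Algebra.smul_def] at hm
    exact (mul_eq_zero.1 hm).resolve_left hX₀
  obtain ⟨Q, hQ, coeff_Q⟩ := exists_degree_lt_coeff_eq fun i => PowerSeries.constantCoeff (u i)
  have decompose (i) : ∃ w, u i = PowerSeries.X * w + PowerSeries.C (Q.coeff i) :=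
    ⟨_, by rw [coeff_Q]; exact (u i).eq_X_mul_shift_add_const⟩
  choose w hw using decompose
  have aeval_Q : Polynomial.aeval θ Q =
      -(algebraMap F⟦X⟧ L PowerSeries.X * ∑ i, w i • θ ^ (i : ℕ)) := by
    rw [eq_neg_iff_add_eq_zero, ← hu, ← sum_C_coeff_mul_X_pow_of_degree_lt hQ, map_sum,
      Finset.mul_sum, ← Finset.sum_add_distrib]
    refine Finset.sum_congr rfl fun i _ => ?_
    rw [hw i, add_smul, mul_smul, add_comm, ← Algebra.smul_def, PowerSeries.C_eq_algebraMap,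
      algebraMap_smul, map_mul, map_pow, Polynomial.aeval_X, Polynomial.aeval_C,
      Algebra.smul_def (Q.coeff i)]
  have integral : v (∑ i, w i • θ ^ (i : ℕ)) ≤ 1 := by
    refine v.map_sum_le fun i _ => ?_
    rw [Algebra.smul_def, map_mul, map_pow]
    exact mul_le_one' (hv _) (pow_le_one' hθ _)
  have dvd_Q : P ∣ Q := by
    refine hP Q ?_
    rw [aeval_Q, Valuation.map_neg, map_mul]
    exact (mul_le_of_le_one_right' integral).trans_lt hX
  have Q_eq_zero : Q = 0 := by
    by_contra hne
    rw [← Polynomial.natDegree_lt_iff_degree_lt hne] at hQ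
    exact hne (Polynomial.eq_zero_of_dvd_of_natDegree_lt dvd_Q hQ)
  intro i
  rw [← coeff_Q, Q_eq_zero, Polynomial.coeff_zero]

end PowersOfGenerator

theorem isAlgebraic_sum_smul_iff_forall_isCartierFinite {R L ι : Type*} [CommRing R] [IsDomain R]
    [Finite R] {p : ℕ} [Fact p.Prime] [CharP R p] [Field L] [Algebra R[X] L] [Algebra R⟦X⟧ L]
    [IsScalarTower R[X] R⟦X⟧ L] [FaithfulSMul R[X] L] [Fintype ι] {ω : ι → L}
    (ht : IsPIndependent p (algebraMap R[X] L Polynomial.X)) (hω : LinearIndependent R⟦X⟧ ω)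
    (hpow : ∀ i n, ω i ^ n ∈ Submodule.span R[X] (Set.range ω))
    (halg : ∀ i, IsAlgebraic R[X] (ω i)) {u : ι → R⟦X⟧} :
    IsAlgebraic R[X] (∑ i, u i • ω i) ↔ ∀ i, IsCartierFinite p (u i) := by
  refine ⟨isCartierFinite_of_isAlgebraic_sum_smul ht hω hpow, fun hu => ?_⟩
  refine Subalgebra.sum_mem (Subalgebra.algebraicClosure R[X] L) fun i _ => ?_
  rw [Algebra.smul_def]
  exact (hu i).isAlgebraic.algebraMap.mul (halg i)

section CompleteField

variable {F L : Type*} [Field F] [Field L] [Algebra F L] {P : F[X]} {θ : L}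

theorem eq_sum_smul_pow_of_hasSum [TopologicalSpace L] [IsTopologicalRing L] [T2Space L]
    [Algebra F⟦X⟧ L] {t : L}
    (heval : ∀ u : F⟦X⟧, HasSum (fun n => algebraMap F L (PowerSeries.coeff n u) * t ^ n)
      (algebraMap F⟦X⟧ L u)) {d : ℕ} {b : ℕ → F[X]} (hb : ∀ n, (b n).degree < d) {y : L}
    (hy : HasSum (fun n => Polynomial.aeval θ (b n) * t ^ n) y) :
    y = ∑ i : Fin d, (PowerSeries.mk fun n => (b n).coeff i) • θ ^ (i : ℕ) := by
  refine hy.unique ?_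
  simp only [Algebra.smul_def]
  convert! hasSum_sum fun (i : Fin d) _ =>
    (heval (PowerSeries.mk fun n => (b n).coeff i)).mul_right (θ ^ (i : ℕ)) using 2 with n
  conv_lhs => rw [← sum_C_coeff_mul_X_pow_of_degree_lt (hb n), map_sum, Finset.sum_mul]
  refine Finset.sum_congr rfl fun i _ => ?_
  rw [PowerSeries.coeff_mk, map_mul, map_pow, Polynomial.aeval_C, Polynomial.aeval_X,
    mul_right_comm]

variable [Algebra (RatFunc F) L] [IsScalarTower F (RatFunc F) L]

theorem aeval_algebraMap_ratFunc_X (Q : F[X]) :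
    Polynomial.aeval (algebraMap (RatFunc F) L RatFunc.X) Q =
      algebraMap (RatFunc F) L (algebraMap F[X] (RatFunc F) Q) := by
  rw [← RatFunc.algebraMap_X, Polynomial.aeval_algebraMap_apply,
    Polynomial.aeval_algebraMap_apply, Polynomial.aeval_X_left_apply]

theorem isAlgebraic_sum_smul_pow_iff [Finite F] {p : ℕ} [Fact p.Prime] [CharP F p]
    [Algebra F[X] L] [Algebra F⟦X⟧ L] [IsScalarTower F F[X] L] [IsScalarTower F[X] F⟦X⟧ L]
    [IsScalarTower F F⟦X⟧ L] (hP : 0 < P.natDegree)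
    (hθ : algebraMap (RatFunc F) L RatFunc.X = θ)
    (hX : algebraMap F[X] L Polynomial.X = Polynomial.aeval θ P)
    {v : Valuation L (WithZero (Multiplicative ℤ))} (hv : ∀ u, v (algebraMap F⟦X⟧ L u) ≤ 1)
    (hvP : v (Polynomial.aeval θ P) = WithZero.exp (-1)) (hvθ : v θ ≤ 1)
    (hdvd : ∀ Q : F[X], v (Polynomial.aeval θ Q) < 1 → P ∣ Q)
    {u : Fin P.natDegree → F⟦X⟧} :
    IsAlgebraic (RatFunc F) (∑ i, u i • θ ^ (i : ℕ)) ↔ ∀ i, IsCartierFinite p (u i) := by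
  have nonconstant := not_exists_algebraMap_eq_ratFunc_C hP
  have hmap (Q : F[X]) : algebraMap F[X] L Q =
      algebraMap (RatFunc F) L (Polynomial.aeval (algebraMap F[X] (RatFunc F) P) Q) := by
    rw [← Polynomial.aeval_algebraMap_apply, ← aeval_algebraMap_ratFunc_X, hθ, ← hX,
      Polynomial.aeval_algebraMap_apply, Polynomial.aeval_X_left_apply]
  have : FaithfulSMul F[X] L := faithfulSMul_of_algebraMap_eq_aeval nonconstant hmap
  have v_X : v (algebraMap F⟦X⟧ L PowerSeries.X) = WithZero.exp (-1) := by
    rw [← hvP, ← hX, IsScalarTower.algebraMap_apply F[X] F⟦X⟧ L, ← Polynomial.coe_X]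
    rfl
  have independent : LinearIndependent F⟦X⟧ fun i : Fin P.natDegree => θ ^ (i : ℕ) :=
    linearIndependent_pow_of_valuation_aeval hv
      (le_exp_neg_one_iff_lt_one.1 v_X.le)
      (v.ne_zero_iff.1 (v_X ▸ WithZero.exp_ne_zero)) hvθ hdvd
  rw [isAlgebraic_ratFunc_iff_of_algebraMap_eq_aeval nonconstant hmap]
  refine isAlgebraic_sum_smul_iff_forall_isCartierFinite ?_ independent (fun i n => ?_) fun i => ?_
  · rw [hX]
    exact isPIndependent_of_valuation_eq_exp_neg_one hvP p
  · rw [← pow_mul]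
    exact pow_mem_span_range_pow_of_aeval_eq_algebraMap hP hX.symm _
  · rw [← isAlgebraic_ratFunc_iff_of_algebraMap_eq_aeval nonconstant hmap, ← hθ]
    exact (isAlgebraic_algebraMap _).pow i

theorem isAlgebraic_iff_isKAutomatic_of_hasSum [Finite F] {p : ℕ} [Fact p.Prime] [CharP F p]
    [hL : Valued L (WithZero (Multiplicative ℤ))] [CompleteSpace L] (hP : 0 < P.natDegree)
    (hθ : algebraMap (RatFunc F) L RatFunc.X = θ)
    (hv : ∀ Q : F[X], hL.v (Polynomial.aeval θ Q) ≤ 1)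
    (hvP : hL.v (Polynomial.aeval θ P) = WithZero.exp (-1))
    (hdvd : ∀ Q : F[X], hL.v (Polynomial.aeval θ Q) < 1 → P ∣ Q)
    {b : ℕ → F[X]} (hb : ∀ n, (b n).degree < P.natDegree) {y : L}
    (hy : HasSum (fun n => Polynomial.aeval θ (b n) * Polynomial.aeval θ P ^ n) y) :
    IsAlgebraic (RatFunc F) y ↔ IsKAutomatic p b := by
  have hv_const (c : F) : hL.v (algebraMap F L c) ≤ 1 := by
    simpa only [Polynomial.aeval_C] using hv (Polynomial.C c)
  have hvP_lt : hL.v (Polynomial.aeval θ P) < 1 := le_exp_neg_one_iff_lt_one.1 hvP.le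
  obtain ⟨φ, hφ, φ_coe, φ_sum⟩ := exists_powerSeries_ringHom_hasSum hv_const hvP_lt
  let : Algebra F⟦X⟧ L := φ.toAlgebra
  let : Algebra F[X] L := (φ.comp (algebraMap F[X] F⟦X⟧)).toAlgebra
  have : IsScalarTower F[X] F⟦X⟧ L := .of_algebraMap_eq' rfl
  have : IsScalarTower F F[X] L := .of_algebraMap_eq fun c =>
    ((φ_coe (Polynomial.C c)).trans (Polynomial.eval₂_C _ _)).symm
  have : IsScalarTower F F⟦X⟧ L := .to₁₃₄ F F[X] F⟦X⟧ L
  have hX : algebraMap F[X] L Polynomial.X = Polynomial.aeval θ P :=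
    (φ_coe Polynomial.X).trans (Polynomial.eval₂_X _ _)
  have hvθ : hL.v θ ≤ 1 := by simpa only [Polynomial.aeval_X] using hv Polynomial.X
  rw [eq_sum_smul_pow_of_hasSum φ_sum hb hy,
    isAlgebraic_sum_smul_pow_iff hP hθ hX hφ hvP hvθ hdvd, isKAutomatic_iff_forall_coeff hb]
  exact forall_congr' fun i => isKAutomatic_iff_isCartierFinite.symm

end CompleteField

theorem exists_valued_sub_algebraMap_lt_one {R K : Type*} [CommRing R] [IsDedekindDomain R]
    [Field K] [Algebra R K] [IsFractionRing R K] {w : HeightOneSpectrum R}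
    {x : w.adicCompletion K} (hx : Valued.v x ≤ 1) :
    ∃ r : R, Valued.v (x - algebraMap K (w.adicCompletion K) (algebraMap R K r)) < 1 := by
  have ball_mem : {y | Valued.v (x - y) < 1} ∈ nhds x := by
    refine Valued.mem_nhds.2 ⟨1, fun y hy => ?_⟩
    rw [Set.mem_ofPred_eq, Units.val_one, Valuation.restrict_lt_one_iff] at hy
    rwa [Set.mem_ofPred_eq, Valuation.map_sub_swap]
  obtain ⟨_, ⟨f, rfl⟩, hf⟩ := (w.denseRange_algebraMap K).inter_nhds_nonempty ball_mem
  rw [Set.mem_ofPred_eq] at hf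
  have valued_algebraMap (g : K) :
      Valued.v (algebraMap K (w.adicCompletion K) g) = w.valuation K g :=
    HeightOneSpectrum.adicCompletion.valued_coe K w g
  have hf_le : w.valuation K f ≤ 1 := by
    rw [← valued_algebraMap, ← sub_sub_cancel x (algebraMap K _ f)]
    exact (Valuation.map_sub _ _ _).trans (max_le hx hf.le)
  obtain ⟨r, hr⟩ := w.exists_valuation_sub_lt_of_integer hf_le 1
  refine ⟨r, ?_⟩
  rw [Units.val_one, Valuation.map_sub_swap, ← valued_algebraMap, map_sub] at hr
  rw [← sub_add_sub_cancel x (algebraMap K _ f)]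
  exact Valuation.map_add_lt _ hf hr

theorem isAlgebraic_mul_algebraMap_iff {K L : Type*} [Field K] [Field L] [Algebra K L] {x : L}
    {c : K} (hc : c ≠ 0) : IsAlgebraic K (x * algebraMap K L c) ↔ IsAlgebraic K x := by
  refine ⟨fun h => ?_, fun h => h.mul (isAlgebraic_algebraMap c)⟩
  have := h.mul (isAlgebraic_algebraMap c⁻¹)
  rwa [mul_assoc, ← map_mul, mul_inv_cancel₀ hc, map_one, mul_one] at this

theorem hasSum_mul_zpow_neg {L : Type*} [Field L] [TopologicalSpace L] [IsTopologicalRing L]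
    {t x : L} (ht : t ≠ 0) {m : ℤ} {c : ℕ → L} (h : HasSum (fun n : ℕ => c n * t ^ (m + n)) x) :
    HasSum (fun n => c n * t ^ n) (x * t ^ (-m)) := by
  convert! h.mul_right (t ^ (-m)) using 2 with n
  rw [mul_assoc, ← zpow_add₀ ht, add_neg_cancel_comm, zpow_natCast]

section Completion

variable {F : Type*} [Field F] {P : F[X]} {hP : Irreducible P}

theorem toAdicCompletion_eq_aeval (Q : F[X]) :
    toAdicCompletion P hP Q = Polynomial.aeval (algebraMap (RatFunc F)
      ((primeOfIrreducible P hP).adicCompletion (RatFunc F)) RatFunc.X) Q :=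
  (aeval_algebraMap_ratFunc_X Q).symm

theorem toAdicCompletion_sub (Q R : F[X]) :
    toAdicCompletion P hP (Q - R) = toAdicCompletion P hP Q - toAdicCompletion P hP R := by
  simp only [toAdicCompletion_eq_aeval, map_sub]

theorem valued_toAdicCompletion (Q : F[X]) :
    Valued.v (toAdicCompletion P hP Q) = (primeOfIrreducible P hP).intValuation Q :=
  (HeightOneSpectrum.adicCompletion.valued_coe _ _ _).trans
    (HeightOneSpectrum.valuation_of_algebraMap _ _)

theorem valued_toAdicCompletion_le_one (Q : F[X]) : Valued.v (toAdicCompletion P hP Q) ≤ 1 :=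
  (valued_toAdicCompletion Q).trans_le (HeightOneSpectrum.intValuation_le_one _ _)

theorem valued_toAdicCompletion_lt_one_iff {Q : F[X]} :
    Valued.v (toAdicCompletion P hP Q) < 1 ↔ P ∣ Q := by
  rw [valued_toAdicCompletion, HeightOneSpectrum.intValuation_lt_one_iff_mem]
  exact Ideal.mem_span_singleton

theorem valued_toAdicCompletion_self :
    Valued.v (toAdicCompletion P hP P) = WithZero.exp (-1) :=
  (valued_toAdicCompletion P).trans (HeightOneSpectrum.intValuation_singleton _ hP.ne_zero rfl)

theorem toAdicCompletion_self_ne_zero : toAdicCompletion P hP P ≠ 0 := by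
  rw [← Valuation.ne_zero_iff Valued.v, valued_toAdicCompletion_self]
  exact WithZero.exp_ne_zero

theorem existsUnique_degree_lt_valued_sub_toAdicCompletion_lt_one
    {x : (primeOfIrreducible P hP).adicCompletion (RatFunc F)} (hx : Valued.v x ≤ 1) :
    ∃! Q : F[X], Q.degree < P.degree ∧ Valued.v (x - toAdicCompletion P hP Q) < 1 := by
  obtain ⟨A, hA⟩ := exists_valued_sub_algebraMap_lt_one hx
  have hA_mod : Valued.v (x - toAdicCompletion P hP (A % P)) < 1 := by
    rw [← sub_add_sub_cancel x (toAdicCompletion P hP A), ← toAdicCompletion_sub]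
    refine Valuation.map_add_lt _ hA (valued_toAdicCompletion_lt_one_iff.2 ?_)
    exact ⟨A / P, sub_eq_of_eq_add (EuclideanDomain.div_add_mod A P).symm⟩
  have degree_mod : (A % P).degree < P.degree := Polynomial.degree_mod_lt _ hP.ne_zero
  refine ⟨A % P, ⟨degree_mod, hA_mod⟩, ?_⟩
  rintro Q ⟨hQ, hxQ⟩
  have hdvd := Valuation.map_sub_lt _ hA_mod hxQ
  rw [sub_sub_sub_cancel_left, ← toAdicCompletion_sub, valued_toAdicCompletion_lt_one_iff] at hdvd
  refine sub_eq_zero.1 (Polynomial.eq_zero_of_dvd_of_degree_lt hdvd ?_)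
  exact (Polynomial.degree_sub_le _ _).trans_lt (max_lt hQ degree_mod)

theorem isAlgebraic_iff_isKAutomatic_of_hasSum_toAdicCompletion [Finite F] {p : ℕ} [Fact p.Prime]
    [CharP F p] {x : (primeOfIrreducible P hP).adicCompletion (RatFunc F)} {m : ℤ} {b : ℕ → F[X]}
    (hb : ∀ n, (b n).degree < P.natDegree) (hx : HasSum (fun n : ℕ =>
      toAdicCompletion P hP (b n) * toAdicCompletion P hP P ^ (m + (n : ℤ))) x) :
    IsAlgebraic (RatFunc F) x ↔ IsKAutomatic p b := by
  have P_ne_zero : algebraMap F[X] (RatFunc F) P ≠ 0 := RatFunc.algebraMap_ne_zero hP.ne_zero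
  have shifted := hasSum_mul_zpow_neg toAdicCompletion_self_ne_zero hx
  rw [toAdicCompletion, ← map_zpow₀] at shifted
  rw [← isAlgebraic_mul_algebraMap_iff (zpow_ne_zero (-m) P_ne_zero)]
  refine isAlgebraic_iff_isKAutomatic_of_hasSum hP.natDegree_pos rfl ?_ ?_ ?_ hb ?_
  all_goals simp only [← toAdicCompletion_eq_aeval]
  · exact valued_toAdicCompletion_le_one
  · exact valued_toAdicCompletion_self
  · exact fun Q => valued_toAdicCompletion_lt_one_iff.1
  · exact shifted

end Completion

/-- Let `P(z) ∈ 𝔽_q[z]` be irreducible of degree `d > 0` and let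
`Γ = {c₀ + c₁ z + ⋯ + c_{d-1} z^{d-1} : cᵢ ∈ 𝔽_q}` be the polynomials of degree
less than `d`.  Then `Γ` is a complete set of representatives modulo `P(z)` in
the `P`-adic completion `K_v` of `𝔽_q(z)`, and for every `x ∈ K_v` with
expansion `x = ∑_{n ≥ m} a_n P(z)ⁿ`, `a_n ∈ Γ`, the element `x` is algebraic
over `𝔽_q(z)` if and only if `{a_n}_{n ≥ m}` is `p`-automatic. -/
theorem adic_expansion_algebraic_iff_automatic
    (p : ℕ) [Fact p.Prime] (F : Type*) [Field F] [Fintype F] [CharP F p]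
    (P : Polynomial F) (hP : Irreducible P) (d : ℕ) (hd : 0 < d)
    (hdeg : P.natDegree = d) :
    (∀ x : (primeOfIrreducible P hP).adicCompletion (RatFunc F),
      Valued.v x ≤ 1 →
        ∃! Q : Polynomial F, Q.degree < (d : ℕ) ∧
          Valued.v (x - toAdicCompletion P hP Q) ≤ Valued.v (toAdicCompletion P hP P)) ∧
    (∀ (x : (primeOfIrreducible P hP).adicCompletion (RatFunc F))
        (m : ℤ) (a : ℤ → Polynomial F),
      (∀ n : ℤ, m ≤ n → (a n).degree < (d : ℕ)) →
      HasSum (fun n : ℕ =>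
        toAdicCompletion P hP (a (m + n)) * toAdicCompletion P hP P ^ (m + (n : ℤ))) x →
      (IsAlgebraic (RatFunc F) x ↔ IsKAutomatic p fun n : ℕ => a (m + n))) := by
  subst hdeg
  refine ⟨fun x hx => ?_, fun x m a ha hx => ?_⟩
  · simp only [valued_toAdicCompletion_self, le_exp_neg_one_iff_lt_one,
      ← Polynomial.degree_eq_natDegree hP.ne_zero]
    exact existsUnique_degree_lt_valued_sub_toAdicCompletion_lt_one hx
  · exact isAlgebraic_iff_isKAutomatic_of_hasSum_toAdicCompletion
      (fun n => ha _ (le_add_of_nonneg_right n.cast_nonneg)) hx
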